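/- Let A be a finite (u×v with u,v ∈ ℕ) image partition regular matrix with rational entries and let B be an infinite (ω×ω) image partition regular matrix with rational entries, each row of B having only finitely many nonzero entries. Then the diagonal sum ( A 0 ; 0 B ) is image partition regular: whenever ℕ is partitioned into finitely many classes, there exist x ∈ ℕ^v and y ∈ ℕ^ω such that all entries of Ax and all entries of By lie in one and the same class. -/

import Mathlib

/- `ℕ+` plays the role of the paper's `ℕ = {1,2,3,…}`.  `Ultrafilter ℕ+` is `βℕ`. -/

/-- Product of ultrafilters: `U ∈ umul p q ↔ {x | {y | x*y ∈ U} ∈ q} ∈ p`. -/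
def umul (p q : Ultrafilter ℕ+) : Ultrafilter ℕ+ :=
  p.bind fun x => q.map fun y => x * y

/-- Sum of ultrafilters: `U ∈ uadd p q ↔ {x | {y | x+y ∈ U} ∈ q} ∈ p`. -/
def uadd (p q : Ultrafilter ℕ+) : Ultrafilter ℕ+ :=
  p.bind fun x => q.map fun y => x + y

/-- The matrix-vector product `Ax` (computed in `ℚ`) of a row-finite matrix `A`
with a vector `x` of positive integers. -/
noncomputable def mulVecQ {ι κ : Type} (A : ι → κ → ℚ) (x : κ → ℕ+) : ι → ℚ :=
  fun i => ∑ᶠ j, A i j * ((x j : ℕ) : ℚ)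

/-- All entries of the vector `y` are (positive) natural numbers lying in `P`. -/
def entriesIn {ι : Type} (y : ι → ℚ) (P : Set ℕ+) : Prop :=
  ∀ i, ∃ n ∈ P, y i = ((n : ℕ) : ℚ)

/-- `A` is image partition regular: for every finite coloring of `ℕ` there is
a vector `x` over `ℕ` all entries of whose image `Ax` are monochromatic. -/
def IPR {ι κ : Type} (A : ι → κ → ℚ) : Prop :=
  ∀ (r : ℕ) (c : ℕ+ → Fin r), ∃ (k : Fin r) (x : κ → ℕ+),
    entriesIn (mulVecQ A x) {n | c n = k}

/-- `I(A) = {p ∈ βℕ : for every P ∈ p there is x over ℕ with all entries of Ax in P}`. -/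
def ISet {ι κ : Type} (A : ι → κ → ℚ) : Set (Ultrafilter ℕ+) :=
  {p | ∀ P ∈ p, ∃ x : κ → ℕ+, entriesIn (mulVecQ A x) P}

/-!
Ultrafilters all of whose members contain the entries of some image of `A` exist when `A` is
image partition regular, by compactness of `βℕ`. Take such `p` for `A` and `q` for `B`. Since
images of a matrix are stable under dilation, both properties pass to the product `p · q`: a
`p`-typical dilate of an image of `B` works for `B`, and, as `A` has only finitely many rows, an
image of `A` can be dilated by one factor that is `q`-typical for all its entries simultaneously.
Any colour class belonging to `p · q` then serves both matrices.
-/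

variable {ι κ : Type}

open Filter

theorem exists_ultrafilter_subset_of_forall_coloring {α : Type*} {S : Set (Set α)}
    (hS : IsUpperSet S) (hcol : ∀ (r : ℕ) (c : α → Fin r), ∃ k, {a | c a = k} ∈ S) :
    ∃ p : Ultrafilter α, ∀ P ∈ p, P ∈ S := by
  by_contra! hbad
  choose P hPmem hPS using hbad
  obtain ⟨t, -, ht⟩ := isCompact_univ.elim_nhds_subcover (fun p ↦ {q : Ultrafilter α | P p ∈ q})
    fun p _ ↦ (ultrafilter_isOpen_basic (P p)).mem_nhds (hPmem p)
  have hcover : ∀ a, ∃ p : t, a ∈ P p := fun a ↦ by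
    simpa only [Set.mem_iUnion, Set.mem_ofPred_eq, Ultrafilter.mem_pure, exists_prop,
      Subtype.exists] using ht (Set.mem_univ (pure a))
  choose g hg using hcover
  obtain ⟨k, hk⟩ := hcol _ (t.equivFin ∘ g)
  refine hPS _ (hS (fun a ha ↦ ?_) hk : P (t.equivFin.symm k) ∈ S)
  rw [← show t.equivFin (g a) = k from ha, Equiv.symm_apply_apply]
  exact hg a

theorem exists_colorClass_mem {α β : Type*} [Finite β] (p : Ultrafilter α) (c : α → β) :
    ∃ k, {a | c a = k} ∈ p := by
  obtain ⟨k, hk⟩ := (p.map c).eq_pure_of_finite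
  have hmem : {k} ∈ p.map c := hk ▸ Ultrafilter.mem_pure.2 rfl
  exact ⟨k, hmem⟩

theorem entriesIn.mono {y : ι → ℚ} {P Q : Set ℕ+} (hy : entriesIn y P) (hPQ : P ⊆ Q) :
    entriesIn y Q :=
  fun i ↦ (hy i).imp fun _ ↦ And.imp_left (@hPQ _)

theorem mulVecQ_const_mul (A : ι → κ → ℚ) (a : ℕ+) (x : κ → ℕ+) (i : ι) :
    mulVecQ A (fun j ↦ a * x j) i = (a : ℕ) * mulVecQ A x i := by
  rw [mulVecQ, mulVecQ, ← smul_eq_mul, smul_finsum]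
  simp only [PNat.mul_coe, Nat.cast_mul, smul_eq_mul, mul_left_comm]

theorem entriesIn_mulVecQ_const_mul {A : ι → κ → ℚ} {x : κ → ℕ+} {m : ι → ℕ+} {P : Set ℕ+}
    (hm : ∀ i, mulVecQ A x i = (m i : ℕ)) {a : ℕ+} (ha : ∀ i, a * m i ∈ P) :
    entriesIn (mulVecQ A fun j ↦ a * x j) P := fun i ↦
  ⟨a * m i, ha i, by rw [mulVecQ_const_mul, hm, PNat.mul_coe, Nat.cast_mul]⟩

theorem IPR.nonempty_ISet {A : ι → κ → ℚ} (hA : IPR A) : (ISet A).Nonempty :=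
  exists_ultrafilter_subset_of_forall_coloring
    (S := {P | ∃ x, entriesIn (mulVecQ A x) P})
    (fun _ _ hPQ ⟨x, hx⟩ ↦ ⟨x, hx.mono hPQ⟩) hA

theorem mem_umul {p q : Ultrafilter ℕ+} {P : Set ℕ+} :
    P ∈ umul p q ↔ ∀ᶠ a in p, ∀ᶠ b in q, a * b ∈ P :=
  Iff.rfl

theorem umul_mem_ISet_of_right {A : ι → κ → ℚ} (p : Ultrafilter ℕ+) {q : Ultrafilter ℕ+}
    (hq : q ∈ ISet A) : umul p q ∈ ISet A := by
  intro P hP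
  obtain ⟨a, ha⟩ := (mem_umul.1 hP).exists
  obtain ⟨x, hx⟩ := hq _ ha
  choose m hmP hm using hx
  exact ⟨fun j ↦ a * x j, entriesIn_mulVecQ_const_mul hm hmP⟩

theorem umul_mem_ISet_of_left [Finite ι] {A : ι → κ → ℚ} {p : Ultrafilter ℕ+}
    (hp : p ∈ ISet A) (q : Ultrafilter ℕ+) : umul p q ∈ ISet A := by
  intro P hP
  obtain ⟨x, hx⟩ := hp _ (mem_umul.1 hP)
  choose m hmP hm using hx
  obtain ⟨b, hb⟩ := (eventually_all.2 hmP).exists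
  exact ⟨fun j ↦ b * x j, entriesIn_mulVecQ_const_mul hm fun i ↦ mul_comm (m i) b ▸ hb i⟩

theorem stmt_2_general [Finite ι] {ι' κ' : Type} {A : ι → κ → ℚ} {B : ι' → κ' → ℚ}
    (hA : IPR A) (hB : IPR B) (r : ℕ) (c : ℕ+ → Fin r) :
    ∃ (k : Fin r) (x : κ → ℕ+) (y : κ' → ℕ+),
      entriesIn (mulVecQ A x) {n | c n = k} ∧ entriesIn (mulVecQ B y) {n | c n = k} := by
  obtain ⟨p, hp⟩ := hA.nonempty_ISet
  obtain ⟨q, hq⟩ := hB.nonempty_ISet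
  obtain ⟨k, hk⟩ := exists_colorClass_mem (umul p q) c
  obtain ⟨x, hx⟩ := umul_mem_ISet_of_left hp q _ hk
  obtain ⟨y, hy⟩ := umul_mem_ISet_of_right p hq _ hk
  exact ⟨k, x, y, hx, hy⟩

/-- Theorem 2.4: if `A` is a finite image partition regular matrix
and `B` is an infinite (`ω×ω`, row-finite) image partition regular matrix, then the
diagonal sum `(A 0; 0 B)` is image partition regular: for every finite coloring of
`ℕ` there are `x ∈ ℕ^v`, `y ∈ ℕ^ω` with all entries of `Ax` and of `By` in one
and the same color class. -/
theorem stmt_2 {u v : ℕ} (A : Fin u → Fin v → ℚ) (B : ℕ → ℕ → ℚ)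
    (hBrow : ∀ i, {j | B i j ≠ 0}.Finite)
    (hA : IPR A) (hB : IPR B) :
    ∀ (r : ℕ) (c : ℕ+ → Fin r), ∃ (k : Fin r) (x : Fin v → ℕ+) (y : ℕ → ℕ+),
      entriesIn (mulVecQ A x) {n | c n = k} ∧
      entriesIn (mulVecQ B y) {n | c n = k} :=
  stmt_2_general hA hB
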